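/- Let S be a free, predicate-linear schema, let p and q be predicate symbols of S with p ⪰ q (p controls q), and let u be a variable. If there exists a qu-couple for S, then there exists a pu-couple for S. -/

import Mathlib

/-!
Suppose no `pu`-couple exists, and let `{i, j}` be a `qu`-couple with runs `σ` and `τ`.

Freeness forces every predicate term to be evaluated at most once along an executable path: the
path may continue with either truth value at every predicate. Hence an interpretation that takes
a default value, false on all while predicates, outside a finite set of predicate terms always
terminates (`exists_run`): a loop can be re-entered only at the finitely many exceptional terms.
Only finitely many predicate terms matter for `σ` and `τ`, so `i` and `j` may be assumed to be of
this form.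

Let `b` be the branch of `p` in which `q` lies (true if `p` is a while predicate). By
predicate-linearity a path through `S` that meets `q` contains a letter `⟨p, b⟩`
(`dominates_of_occurs`). Take `!b` as the default value of `p`; this is compatible with
termination, as `b` is false only for an if predicate. Now change the finitely many remaining
values `b` of `p` to `!b`, one after the other. All interpretations on the way terminate, and as
there is no `pu`-couple the final value of `u` never changes (`flip_finset`). The resulting
interpretations never reach `q`, so `i` and `j` have become indistinguishable and produce the same
final value of `u`. The same then holds for the original `i` and `j`, a contradiction.
-/

/-!
Common formalization of program schemas (Danicic–Hierons–Laurence):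
letters/paths, Herbrand semantics, freeness, liberality, subschemas,
data/control dependence, Weiser's set `Need`, slices and couples.
Function symbols, predicate symbols, variables and labels are all
modelled by `ℕ` (function and predicate symbols kept disjoint by
construction of the syntax).
-/

namespace SchemaSlicing

/-- Letters of the alphabet Λ(S): assignment letters `y := f^(l)(args)` and
predicate letters `⟨p^(l)(args), b⟩`. -/
inductive Letter : Type
  | asn (y : ℕ) (f : ℕ) (l : ℕ) (args : List ℕ)
  | prd (p : ℕ) (l : ℕ) (args : List ℕ) (b : Bool)
  deriving DecidableEq

/-- Program schemas. -/
inductive Schema : Type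
  | skip
  | assign (y : ℕ) (f : ℕ) (l : ℕ) (args : List ℕ)
  | seq (S₁ S₂ : Schema)
  | ite (p : ℕ) (l : ℕ) (args : List ℕ) (Tt Tf : Schema)
  | whil (p : ℕ) (l : ℕ) (args : List ℕ) (body : Schema)

/-- Complete paths of a while loop iterated `n` times. -/
def whileIter (p l : ℕ) (args : List ℕ) (B : Set (List Letter)) : ℕ → Set (List Letter)
  | 0 => {[Letter.prd p l args false]}
  | n + 1 => {σ | ∃ x ∈ B, ∃ y ∈ whileIter p l args B n, σ = Letter.prd p l args true :: (x ++ y)}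

/-- The set Π(S) of complete paths through a schema. -/
def Paths : Schema → Set (List Letter)
  | .skip => {[]}
  | .assign y f l args => {[Letter.asn y f l args]}
  | .seq S₁ S₂ => {σ | ∃ x ∈ Paths S₁, ∃ y ∈ Paths S₂, σ = x ++ y}
  | .ite p l args Tt Tf =>
      {σ | (∃ x ∈ Paths Tt, σ = Letter.prd p l args true :: x) ∨
           (∃ x ∈ Paths Tf, σ = Letter.prd p l args false :: x)}
  | .whil p l args body => {σ | ∃ n, σ ∈ whileIter p l args (Paths body) n}

/-- pre(Π(S)): finite prefixes of complete paths. -/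
def PrePaths (S : Schema) : Set (List Letter) := {σ | ∃ τ, σ <+: τ ∧ τ ∈ Paths S}

/-- μ is a path-segment of S. -/
def PathSegment (S : Schema) (μ : List Letter) : Prop := ∃ a b, a ++ μ ++ b ∈ Paths S

/-- μ is a terminal path-segment of S. -/
def TerminalSegment (S : Schema) (μ : List Letter) : Prop := ∃ a, a ++ μ ∈ Paths S

/-- An interpretation over a domain `D`. -/
structure Interp (D : Type) where
  fn : ℕ → List D → D
  pr : ℕ → List D → Bool

/-- One execution step on states. -/
def stepL {D : Type} (I : Interp D) (d : ℕ → D) : Letter → (ℕ → D)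
  | .asn y f _ args => Function.update d y (I.fn f (args.map d))
  | .prd _ _ _ _ => d

/-- `M[σ]^I_d`: the state after executing the assignment letters of σ from d. -/
def execP {D : Type} (I : Interp D) (d : ℕ → D) (σ : List Letter) : ℕ → D :=
  σ.foldl (stepL I) d

/-- σ is consistent with the interpretation `I` from initial state `d`:
every predicate letter along σ is evaluated according to `I`. -/
def Agrees {D : Type} (I : Interp D) (d : ℕ → D) (σ : List Letter) : Prop :=
  ∀ τ p l args b, τ ++ [Letter.prd p l args b] <+: σ →
    I.pr p (args.map (execP I d τ)) = b

/-- σ is the (terminating) path `π_S(I,d)`. -/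
def TermRun {D : Type} (S : Schema) (I : Interp D) (d : ℕ → D) (σ : List Letter) : Prop :=
  σ ∈ Paths S ∧ Agrees I d σ

/-- `M[S]^I_d ≠ ⊥`. -/
def Terminates {D : Type} (S : Schema) (I : Interp D) (d : ℕ → D) : Prop :=
  ∃ σ, TermRun S I d σ

/-- Terms over function symbols and variables (the Herbrand domain). -/
inductive Trm : Type
  | var : ℕ → Trm
  | app : ℕ → List Trm → Trm

/-- A Herbrand interpretation is determined by its predicate part. -/
abbrev HInterp := ℕ → List Trm → Bool

/-- The Herbrand interpretation with predicate part `h`. -/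
def herb (h : HInterp) : Interp Trm := ⟨Trm.app, h⟩

/-- The natural state `e`. -/
def eSt : ℕ → Trm := Trm.var

/-- `M[σ]_e`: Herbrand execution of the assignment letters of σ from e. -/
def hexec (σ : List Letter) : ℕ → Trm := execP (herb fun _ _ => false) eSt σ

/-- σ is consistent with the Herbrand interpretation `i` from `e`. -/
def hAgrees (i : HInterp) (σ : List Letter) : Prop := Agrees (herb i) eSt σ

/-- A schema is free if every prefix of a complete path is a prefix of
`π_S(i,e)` for some Herbrand interpretation i. -/
def Free (S : Schema) : Prop := ∀ σ ∈ PrePaths S, ∃ i : HInterp, hAgrees i σ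

/-- A schema is liberal if along any executable path (from `e`, under a
Herbrand interpretation) no two assignments produce the same term. -/
def Liberal (S : Schema) : Prop :=
  ∀ (i : HInterp) (μ ν : List Letter) (y f l args w g m brgs),
    (μ ++ Letter.asn y f l args :: (ν ++ [Letter.asn w g m brgs])) ∈ PrePaths S →
    hAgrees i (μ ++ Letter.asn y f l args :: (ν ++ [Letter.asn w g m brgs])) →
    hexec (μ ++ [Letter.asn y f l args]) y ≠
      hexec (μ ++ Letter.asn y f l args :: (ν ++ [Letter.asn w g m brgs])) w

/-- Labelled symbols: labelled function symbols and labelled predicate symbols. -/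
inductive LSym : Type
  | fn (f l : ℕ)
  | pr (p l : ℕ)
  deriving DecidableEq

/-- The set of labelled symbols occurring in a schema. -/
def lsymSet : Schema → Set LSym
  | .skip => ∅
  | .assign _ f l _ => {LSym.fn f l}
  | .seq a b => lsymSet a ∪ lsymSet b
  | .ite p l _ t e => insert (LSym.pr p l) (lsymSet t ∪ lsymSet e)
  | .whil p l _ b => insert (LSym.pr p l) (lsymSet b)

/-- Number of occurrences of a labelled symbol in a schema. -/
def lsymCount : Schema → LSym → ℕ
  | .skip, _ => 0
  | .assign _ f l _, x => if x = LSym.fn f l then 1 else 0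
  | .seq a b, x => lsymCount a x + lsymCount b x
  | .ite p l _ t e, x => (if x = LSym.pr p l then 1 else 0) + lsymCount t x + lsymCount e x
  | .whil p l _ b, x => (if x = LSym.pr p l then 1 else 0) + lsymCount b x

/-- Standing convention: distinct occurrences of the same symbol carry distinct labels. -/
def WellLabelled (S : Schema) : Prop := ∀ x, lsymCount S x ≤ 1

/-- Number of occurrences of a predicate symbol in a schema. -/
def predCount : Schema → ℕ → ℕ
  | .skip, _ => 0
  | .assign _ _ _ _, _ => 0
  | .seq a b, p => predCount a p + predCount b p
  | .ite q _ _ t e, p => (if q = p then 1 else 0) + predCount t p + predCount e p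
  | .whil q _ _ b, p => (if q = p then 1 else 0) + predCount b p

/-- No predicate symbol occurs more than once. -/
def PredLinear (S : Schema) : Prop := ∀ p, predCount S p ≤ 1

/-- `Occurs T S`: T occurs as a subtree (statement) of S. -/
inductive Occurs : Schema → Schema → Prop
  | refl (S : Schema) : Occurs S S
  | seqL {S T U : Schema} : Occurs S T → Occurs S (.seq T U)
  | seqR {S T U : Schema} : Occurs S U → Occurs S (.seq T U)
  | iteT {S t e : Schema} {p l args} : Occurs S t → Occurs S (.ite p l args t e)
  | iteF {S t e : Schema} {p l args} : Occurs S e → Occurs S (.ite p l args t e)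
  | whilB {S b : Schema} {p l args} : Occurs S b → Occurs S (.whil p l args b)

/-- The schema contains an assignment to the variable v. -/
def AssignsTo : Schema → ℕ → Prop
  | .skip, _ => False
  | .assign y _ _ _, v => y = v
  | .seq a b, v => AssignsTo a v ∨ AssignsTo b v
  | .ite _ _ _ t e, v => AssignsTo t v ∨ AssignsTo e v
  | .whil _ _ _ b, v => AssignsTo b v

/-- The schema contains an assignment `v := f(...)`. -/
def AssignsWith : Schema → ℕ → ℕ → Prop
  | .skip, _, _ => False
  | .assign y g _ _, f, v => g = f ∧ y = v
  | .seq a b, f, v => AssignsWith a f v ∨ AssignsWith b f v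
  | .ite _ _ _ t e, f, v => AssignsWith t f v ∨ AssignsWith e f v
  | .whil _ _ _ b, f, v => AssignsWith b f v

/-- If a function symbol occurs in assignments in both parts of an if
predicate, then those assignments assign to distinct variables. -/
def IfPartsCondition (S : Schema) : Prop :=
  ∀ p l args t e, Occurs (Schema.ite p l args t e) S →
    ∀ f v, AssignsWith t f v → AssignsWith e f v → False

/-- Special schemas: (well-labelled,) predicate-linear, free, liberal,
satisfying the condition on the two parts of each if predicate. -/
def Special (S : Schema) : Prop :=
  WellLabelled S ∧ PredLinear S ∧ Free S ∧ Liberal S ∧ IfPartsCondition S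

/-- `Subschema T S`: T is obtained from S by deleting statements. -/
inductive Subschema : Schema → Schema → Prop
  | skip (S : Schema) : Subschema .skip S
  | refl (S : Schema) : Subschema S S
  | seqL (S₁ S₂ : Schema) : Subschema S₁ (.seq S₁ S₂)
  | seqR (S₁ S₂ : Schema) : Subschema S₂ (.seq S₁ S₂)
  | seqCongrL {S' S : Schema} (T : Schema) :
      Subschema S' S → Subschema (.seq S' T) (.seq S T)
  | seqCongrR {T' T : Schema} (S : Schema) :
      Subschema T' T → Subschema (.seq S T') (.seq S T)
  | whilCongr {T' T : Schema} (p l : ℕ) (args : List ℕ) :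
      Subschema T' T → Subschema (.whil p l args T') (.whil p l args T)
  | iteCongrT {T' T : Schema} (p l : ℕ) (args : List ℕ) (E : Schema) :
      Subschema T' T → Subschema (.ite p l args T' E) (.ite p l args T E)
  | iteCongrF {E' E : Schema} (p l : ℕ) (args : List ℕ) (T : Schema) :
      Subschema E' E → Subschema (.ite p l args T E') (.ite p l args T E)
  | trans {A B C : Schema} : Subschema A B → Subschema B C → Subschema A C

/-- T is a u-slice of S (u a variable): over every domain, state and
interpretation, if S terminates then T terminates with the same final value of u. -/
def IsUSlice (S T : Schema) (u : ℕ) : Prop :=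
  ∀ (D : Type) (I : Interp D) (d : ℕ → D),
    Terminates S I d →
      Terminates T I d ∧
      ∀ σ τ, TermRun S I d σ → TermRun T I d τ → execP I d σ u = execP I d τ u

/-- T is an ω-slice of S: S and T have the same termination behaviour. -/
def IsOmegaSlice (S T : Schema) : Prop :=
  ∀ (D : Type) (I : Interp D) (d : ℕ → D), Terminates S I d ↔ Terminates T I d

/-- `IsFTrm F t`: t is an F-term, for a (nonempty) word F of function symbols. -/
inductive IsFTrm : List ℕ → Trm → Prop
  | base (f : ℕ) (ts : List Trm) : IsFTrm [f] (.app f ts)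
  | step {F : List ℕ} {t : Trm} (g : ℕ) {ts : List Trm} :
      t ∈ ts → IsFTrm F t → IsFTrm (F ++ [g]) (.app g ts)

/-- `IsVFTrm v F t`: t is a vF-term. -/
inductive IsVFTrm (v : ℕ) : List ℕ → Trm → Prop
  | base : IsVFTrm v [] (.var v)
  | step {F : List ℕ} {t : Trm} (g : ℕ) {ts : List Trm} :
      t ∈ ts → IsVFTrm v F t → IsVFTrm v (F ++ [g]) (.app g ts)

/-- The function symbol f occurs in the term t. -/
inductive OccIn (f : ℕ) : Trm → Prop
  | here (ts : List Trm) : OccIn f (.app f ts)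
  | there {g : ℕ} {ts : List Trm} {t : Trm} : t ∈ ts → OccIn f t → OccIn f (.app g ts)

/-- Labelled terms: applications additionally record the label of the
assignment that created them. -/
inductive LTrm : Type
  | var : ℕ → LTrm
  | app : ℕ → ℕ → List LTrm → LTrm

def lStep (d : ℕ → LTrm) : Letter → (ℕ → LTrm)
  | .asn y f l args => Function.update d y (LTrm.app f l (args.map d))
  | .prd _ _ _ _ => d

/-- Labelled Herbrand execution from e. -/
def lexec (σ : List Letter) : ℕ → LTrm := σ.foldl lStep LTrm.var

/-- F-terms for words F of labelled function symbols. -/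
inductive IsFLTrm : List (ℕ × ℕ) → LTrm → Prop
  | base (f l : ℕ) (ts : List LTrm) : IsFLTrm [(f, l)] (.app f l ts)
  | step {F : List (ℕ × ℕ)} {t : LTrm} (g m : ℕ) {ts : List LTrm} :
      t ∈ ts → IsFLTrm F t → IsFLTrm (F ++ [(g, m)]) (.app g m ts)

/-- `f^(l) ⤳ u` for a variable u. -/
def DepFV (S : Schema) (fl : ℕ × ℕ) (u : ℕ) : Prop :=
  ∃ σ, TerminalSegment S σ ∧ IsFLTrm [fl] (lexec σ u)

/-- `f^(l) ⤳ g^(m)` for labelled function symbols. -/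
def DepFF (S : Schema) (fl gm : ℕ × ℕ) : Prop :=
  ∃ σ, PathSegment S σ ∧ ∃ w, IsFLTrm [fl, gm] (lexec σ w)

/-- `f^(l) ⤳ q^(m)` for a labelled predicate. -/
def DepFP (S : Schema) (fl : ℕ × ℕ) (q m : ℕ) : Prop :=
  ∃ σ args Z, PathSegment S (σ ++ [Letter.prd q m args Z]) ∧
    ∃ w ∈ args, IsFLTrm [fl] (lexec σ w)

/-- `f^(l) ⤳ x` for a labelled symbol x. -/
def DepFX (S : Schema) (fl : ℕ × ℕ) : LSym → Prop
  | .fn g m => DepFF S fl (g, m)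
  | .pr q m => DepFP S fl q m

/-- The labelled predicate `p^(l)` controls the labelled symbol x in S. -/
def ControlsL (S : Schema) (p l : ℕ) (x : LSym) : Prop :=
  (∃ args t e, Occurs (Schema.ite p l args t e) S ∧ (x ∈ lsymSet t ∨ x ∈ lsymSet e)) ∨
  (∃ args b, Occurs (Schema.whil p l args b) S ∧ x ∈ lsymSet b)

/-- `p^(l)` is a while predicate of S. -/
def IsWhilePred (S : Schema) (p l : ℕ) : Prop :=
  ∃ args b, Occurs (Schema.whil p l args b) S

/-- Slicing criteria: a variable, or termination (ω). -/
inductive Crit : Type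
  | var : ℕ → Crit
  | omega

/-- Weiser's labelled symbol set `Need_S(u)`. -/
inductive Need (S : Schema) : Crit → LSym → Prop
  | ofVar {v f l : ℕ} : DepFV S (f, l) v → Need S (.var v) (.fn f l)
  | ofOmega {p l : ℕ} : IsWhilePred S p l → Need S .omega (.pr p l)
  | ofDep {u : Crit} {f l : ℕ} {x : LSym} :
      Need S u x → DepFX S (f, l) x → Need S u (.fn f l)
  | ofControl {u : Crit} {p l : ℕ} {x : LSym} :
      Need S u x → ControlsL S p l x → Need S u (.pr p l)

/-- `{i,j}` is a p(ts)-couple: i and j differ at the predicate term p(ts)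
and agree on every other predicate term. -/
def PTCouple (p : ℕ) (ts : List Trm) (i j : HInterp) : Prop :=
  i p ts ≠ j p ts ∧ ∀ q ss, (q, ss) ≠ (p, ts) → i q ss = j q ss

/-- `{i,j}` is a p(ts)u-couple for S. -/
def PTUCouple (S : Schema) (p : ℕ) (ts : List Trm) (u : ℕ) (i j : HInterp) : Prop :=
  PTCouple p ts i j ∧
  ∃ σ τ, TermRun S (herb i) eSt σ ∧ TermRun S (herb j) eSt τ ∧ hexec σ u ≠ hexec τ u

/-- `{i,j}` is a pu-couple for S. -/
def PUCouple (S : Schema) (p u : ℕ) (i j : HInterp) : Prop :=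
  ∃ ts, PTUCouple S p ts u i j

/-- `{i,j}` is a pω-couple for S: a p-couple such that exactly one of the
two runs terminates. -/
def POmegaCouple (S : Schema) (p : ℕ) (i j : HInterp) : Prop :=
  ∃ ts, PTCouple p ts i j ∧
    Xor' (Terminates S (herb i) eSt) (Terminates S (herb j) eSt)

/-- A `p^(l)u`-couple for S presented with its divergence data: the common
prefix `head` (the head of the couple), the argument vector of `p^(l)` at the
divergence point, and the two tails. -/
def LPUCoupleData (S : Schema) (p l u : ℕ) (i j : HInterp)
    (head : List Letter) (args : List ℕ) (ρt ρf : List Letter) : Prop :=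
  PTCouple p (args.map (hexec head)) i j ∧
  TermRun S (herb i) eSt (head ++ Letter.prd p l args true :: ρt) ∧
  TermRun S (herb j) eSt (head ++ Letter.prd p l args false :: ρf) ∧
  hexec (head ++ Letter.prd p l args true :: ρt) u ≠
    hexec (head ++ Letter.prd p l args false :: ρf) u

/-- A (p,X)-link in S. -/
def PLink (S : Schema) (p : ℕ) (X : Bool) (ν : List Letter) : Prop :=
  (∃ l args t e, Occurs (Schema.ite p l args t e) S ∧
     ∃ π ∈ Paths (if X then t else e), ν = Letter.prd p l args X :: π) ∨
  (∃ l args b, Occurs (Schema.whil p l args b) S ∧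
     ((X = false ∧ ν = [Letter.prd p l args false]) ∨
      (X = true ∧ ∃ π ∈ Paths b, ∃ ρ ∈ Paths (Schema.whil p l args b),
        ν = Letter.prd p l args true :: (π ++ ρ))))

/-- The path-segment μ v-feeds p to q in S. -/
def VFeeds (S : Schema) (v p q : ℕ) (μ : List Letter) : Prop :=
  ∃ X ν, PLink S p X ν ∧ ∃ m args, PathSegment S (ν ++ μ ++ [Letter.prd q m args true]) ∧
    ∃ w ∈ args, ∃ F, IsVFTrm v F (hexec μ w)

/-- There is an assignment to v in the body (while) or in the true or
false part (if) of the predicate p in S. -/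
def AssignInPart (S : Schema) (p v : ℕ) : Prop :=
  (∃ l args t e, Occurs (Schema.ite p l args t e) S ∧ (AssignsTo t v ∨ AssignsTo e v)) ∨
  (∃ l args b, Occurs (Schema.whil p l args b) S ∧ AssignsTo b v)

/-- The (unlabelled) symbol of a letter (function symbols and predicate
symbols kept disjoint via a sum). -/
def symOf : Letter → Sum ℕ ℕ
  | .asn _ f _ _ => .inl f
  | .prd p _ _ _ => .inr p

/-- The labelled symbol of a letter. -/
def lsymOf : Letter → LSym
  | .asn _ f l _ => .fn f l
  | .prd p l _ _ => .pr p l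

/-- The vector of variables referenced by a letter. -/
def refsOf : Letter → List ℕ
  | .asn _ _ _ args => args
  | .prd _ _ args _ => args

/-- Statements of predicate-free schemas. -/
inductive PFStmt : Type
  | skip
  | asn (y : ℕ) (f : ℕ) (args : List ℕ)
  deriving DecidableEq

/-- A predicate-free schema is a finite sequence of skips and assignments. -/
abbrev PFS := List PFStmt

def pfStep (d : ℕ → Trm) : PFStmt → (ℕ → Trm)
  | .skip => d
  | .asn y f args => Function.update d y (Trm.app f (args.map d))

/-- Execution of a predicate-free schema from a state d. -/
def pfExecFrom (d : ℕ → Trm) (U : PFS) : ℕ → Trm := U.foldl pfStep d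

/-- `M[U]_e` for a predicate-free schema. -/
def pfExec (U : PFS) : ℕ → Trm := pfExecFrom eSt U

/-- A predicate-free schema is liberal: executed from e, no two of its
assignments produce equal term values. -/
def PFLiberal (U : PFS) : Prop :=
  ∀ A y f args B w g brgs C,
    U = A ++ PFStmt.asn y f args :: (B ++ PFStmt.asn w g brgs :: C) →
    pfExec (A ++ [PFStmt.asn y f args]) y ≠
      pfExec (A ++ PFStmt.asn y f args :: (B ++ [PFStmt.asn w g brgs])) w

end SchemaSlicing

namespace SchemaSlicing

/-! ### Agreement of a path with a Herbrand interpretation -/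

lemma execP_herb (i : HInterp) (σ : List Letter) : execP (herb i) eSt σ = hexec σ := by
  unfold hexec execP
  congr 1

lemma hAgrees_iff (i : HInterp) (σ : List Letter) :
    hAgrees i σ ↔ ∀ τ p l args b, τ ++ [Letter.prd p l args b] <+: σ →
      i p (args.map (hexec τ)) = b := by
  unfold hAgrees Agrees
  simp only [execP_herb]
  rfl

lemma hAgrees.mono {i : HInterp} {σ τ : List Letter} (h : hAgrees i τ) (hp : σ <+: τ) :
    hAgrees i σ := by
  intro ρ p l args b hb
  exact h ρ p l args b (hb.trans hp)

lemma hAgrees_nil (i : HInterp) : hAgrees i [] := by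
  rw [hAgrees_iff]
  intro τ p l args b hb
  simp at hb

lemma hAgrees_asn (i : HInterp) (σ : List Letter) (y f l : ℕ) (args : List ℕ) :
    hAgrees i (σ ++ [Letter.asn y f l args]) ↔ hAgrees i σ := by
  refine ⟨fun h => h.mono (List.prefix_append _ _), fun h => ?_⟩
  rw [hAgrees_iff] at h ⊢
  intro τ p l' args' b hb
  rw [List.prefix_concat_iff] at hb
  rcases hb with hb | hb
  · have := (List.append_inj' hb rfl).2
    simp at this
  · exact h τ p l' args' b hb

lemma hAgrees_prd (i : HInterp) (σ : List Letter) (p l : ℕ) (args : List ℕ) (b : Bool) :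
    hAgrees i (σ ++ [Letter.prd p l args b]) ↔
      hAgrees i σ ∧ i p (args.map (hexec σ)) = b := by
  refine ⟨fun h => ⟨h.mono (List.prefix_append _ _), ?_⟩, fun h => ?_⟩
  · rw [hAgrees_iff] at h
    exact h _ _ _ _ _ List.prefix_rfl
  · obtain ⟨h, h1⟩ := h
    rw [hAgrees_iff] at h ⊢
    intro τ p' l' args' b' hb
    rw [List.prefix_concat_iff] at hb
    rcases hb with hb | hb
    · obtain ⟨h2, h3⟩ := List.append_inj' hb rfl
      simp only [List.cons.injEq, Letter.prd.injEq, and_true] at h3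
      obtain ⟨rfl, rfl, rfl, rfl⟩ := h3
      rw [h2]
      exact h1
    · exact h τ p' l' args' b' hb

/-- Whether a path agrees with an interpretation depends on finitely many predicate terms. -/
lemma exists_finite_support (σ : List Letter) :
    ∃ F : Set (ℕ × List Trm), F.Finite ∧ ∀ i j : HInterp, hAgrees i σ →
      (∀ r ts, (r, ts) ∈ F → j r ts = i r ts) → hAgrees j σ := by
  induction σ using List.reverseRecOn with
  | nil => exact ⟨∅, Set.finite_empty, fun i j _ _ => hAgrees_nil j⟩
  | append_singleton σ c ih =>
    obtain ⟨F, hF, h⟩ := ih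
    cases c with
    | asn y f l args =>
      refine ⟨F, hF, fun i j hi hij => ?_⟩
      rw [hAgrees_asn] at hi ⊢
      exact h i j hi hij
    | prd p l args b =>
      refine ⟨insert (p, args.map (hexec σ)) F, hF.insert _, fun i j hi hij => ?_⟩
      rw [hAgrees_prd] at hi ⊢
      refine ⟨h i j hi.1 fun r ts hr => hij r ts (Set.mem_insert_of_mem _ hr), ?_⟩
      rw [hij _ _ (Set.mem_insert _ _), hi.2]

lemma agrees_of_no_pred {i j : HInterp} {q : ℕ} {σ : List Letter} (hi : hAgrees i σ)
    (hq : ∀ l args b, Letter.prd q l args b ∉ σ) (hij : ∀ r ts, r ≠ q → i r ts = j r ts) :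
    hAgrees j σ := by
  rw [hAgrees_iff] at hi ⊢
  intro τ r l args b hb
  rw [← hij, hi τ r l args b hb]
  rintro rfl
  exact hq l args b (hb.subset (by simp))

/-! ### Paths, uniqueness of runs and termination -/

lemma whil_false_mem (p l : ℕ) (args : List ℕ) (T : Schema) :
    [Letter.prd p l args false] ∈ Paths (.whil p l args T) := ⟨0, rfl⟩

lemma whil_true_mem {p l : ℕ} {args : List ℕ} {T : Schema} {x y : List Letter}
    (hx : x ∈ Paths T) (hy : y ∈ Paths (.whil p l args T)) :
    Letter.prd p l args true :: (x ++ y) ∈ Paths (.whil p l args T) := by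
  obtain ⟨n, hn⟩ := hy
  exact ⟨n + 1, x, hx, y, hn, rfl⟩

lemma paths_nonempty (T : Schema) : (Paths T).Nonempty := by
  induction T with
  | skip => exact ⟨[], rfl⟩
  | assign y f l args => exact ⟨_, rfl⟩
  | seq A B hA hB =>
    obtain ⟨x, hx⟩ := hA
    obtain ⟨y, hy⟩ := hB
    exact ⟨_, x, hx, y, hy, rfl⟩
  | ite p l args A B hA hB =>
    obtain ⟨x, hx⟩ := hA
    exact ⟨_, Or.inl ⟨x, hx, rfl⟩⟩
  | whil p l args T _ => exact ⟨_, whil_false_mem p l args T⟩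

lemma run_unique_aux (i : HInterp) (T : Schema) : ∀ σ x y : List Letter,
    x ∈ Paths T → y ∈ Paths T → ∀ x' y' : List Letter,
    hAgrees i (σ ++ (x ++ x')) → hAgrees i (σ ++ (y ++ y')) → x = y := by
  -- two agreeing continuations by the same predicate choose the same branch
  have key : ∀ (σ x y : List Letter) (p l : ℕ) (args : List ℕ) (b c : Bool),
      hAgrees i (σ ++ Letter.prd p l args b :: x) →
      hAgrees i (σ ++ Letter.prd p l args c :: y) → b = c := by
    intro σ x y p l args b c h1 h2
    have h3 := (hAgrees_prd i σ p l args b).1 (h1.mono ⟨x, by simp⟩)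
    have h4 := (hAgrees_prd i σ p l args c).1 (h2.mono ⟨y, by simp⟩)
    rw [← h3.2, ← h4.2]
  induction T with
  | skip => rintro σ x y rfl rfl; intros; rfl
  | assign v f l args => rintro σ x y rfl rfl; intros; rfl
  | seq A B hA hB =>
    rintro σ _ _ ⟨a, ha, b, hb, rfl⟩ ⟨a2, ha2, b2, hb2, rfl⟩ x' y' h1 h2
    obtain rfl := hA σ a a2 ha ha2 (b ++ x') (b2 ++ y') (by simpa using h1) (by simpa using h2)
    rw [hB (σ ++ a) b b2 hb hb2 x' y' (by simpa using h1) (by simpa using h2)]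
  | ite p l args A B hA hB =>
    rintro σ x y hx hy x' y' h1 h2
    rcases hx with ⟨a, ha, rfl⟩ | ⟨a, ha, rfl⟩ <;> rcases hy with ⟨c, hc, rfl⟩ | ⟨c, hc, rfl⟩
    · rw [hA (σ ++ [Letter.prd p l args true]) a c ha hc x' y' (by simpa using h1)
        (by simpa using h2)]
    · exact absurd (key _ _ _ _ _ _ _ _ h1 h2) (by simp)
    · exact absurd (key _ _ _ _ _ _ _ _ h1 h2) (by simp)
    · rw [hB (σ ++ [Letter.prd p l args false]) a c ha hc x' y' (by simpa using h1)
        (by simpa using h2)]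
  | whil p l args B hB =>
    rintro σ x y ⟨n, hn⟩ ⟨m, hm⟩ x' y' h1 h2
    induction n generalizing σ x y m with
    | zero =>
      cases m with
      | zero => rw [show x = _ from hn, show y = _ from hm]
      | succ m =>
        obtain ⟨a, ha, c, hc, rfl⟩ := hm
        obtain rfl : x = _ := hn
        exact absurd (key _ _ _ _ _ _ _ _ h1 h2) (by simp)
    | succ n ih =>
      obtain ⟨a, ha, c, hc, rfl⟩ := hn
      cases m with
      | zero =>
        obtain rfl : y = _ := hm
        exact absurd (key _ _ _ _ _ _ _ _ h1 h2) (by simp)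
      | succ m =>
        obtain ⟨a2, ha2, c2, hc2, rfl⟩ := hm
        obtain rfl := hB (σ ++ [Letter.prd p l args true]) a a2 ha ha2 (c ++ x') (c2 ++ y')
          (by simpa using h1) (by simpa using h2)
        rw [ih (σ ++ Letter.prd p l args true :: a) c c2 hc m hc2 (by simpa using h1)
          (by simpa using h2)]

lemma run_unique {i : HInterp} {S : Schema} {σ τ : List Letter}
    (hσ : TermRun S (herb i) eSt σ) (hτ : TermRun S (herb i) eSt τ) : σ = τ :=
  run_unique_aux i S [] σ τ hσ.1 hτ.1 [] [] (by simpa [hAgrees] using hσ.2)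
    (by simpa [hAgrees] using hτ.2)

/-- `r` is the predicate of some while-schema inside the schema. -/
def HasWhile : Schema → ℕ → Prop
  | .skip, _ => False
  | .assign _ _ _ _, _ => False
  | .seq a b, r => HasWhile a r ∨ HasWhile b r
  | .ite _ _ _ t e, r => HasWhile t r ∨ HasWhile e r
  | .whil q _ _ b, r => q = r ∨ HasWhile b r

/-- The predicate terms evaluated along a path, executed from the natural state. -/
def Visited (σ : List Letter) : Set (ℕ × List Trm) :=
  {x | ∃ τ l args b, τ ++ [Letter.prd x.1 l args b] <+: σ ∧ x.2 = args.map (hexec τ)}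

/-- In a free schema, a predicate term about to be evaluated has not been evaluated before,
since both truth values are possible continuations. -/
lemma not_visited {S : Schema} (hF : Free S) {σ : List Letter} {q l : ℕ} {args : List ℕ}
    (h : ∀ b, σ ++ [Letter.prd q l args b] ∈ PrePaths S) :
    (q, args.map (hexec σ)) ∉ Visited σ := by
  rintro ⟨τ, l', args', b, hp, he⟩
  obtain ⟨i, hi⟩ := hF _ (h (!b))
  rw [hAgrees_prd, hAgrees_iff] at hi
  have := hi.1 _ _ _ _ _ hp
  simp only at he this
  rw [← he, hi.2] at this
  simp at this

/-- Inside a free schema, an interpretation that is false on all but finitely many terms of the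
while predicates of `T` completes every execution of `T`. -/
lemma exists_run_aux {S : Schema} (hF : Free S) {k : HInterp} {F : Set (ℕ × List Trm)}
    (hFin : F.Finite) (T : Schema)
    (hk : ∀ r ts, HasWhile T r → (r, ts) ∉ F → k r ts = false) :
    ∀ σ, (∀ x ∈ Paths T, σ ++ x ∈ PrePaths S) → hAgrees k σ →
      ∃ x ∈ Paths T, hAgrees k (σ ++ x) := by
  have prem : ∀ {a b : List Letter}, a <+: b → b ∈ PrePaths S → a ∈ PrePaths S := by
    rintro a b hab ⟨τ, h1, h2⟩
    exact ⟨τ, hab.trans h1, h2⟩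
  induction T with
  | skip => intro σ _ h; exact ⟨[], rfl, by simpa using h⟩
  | assign y f l args =>
    intro σ _ h
    exact ⟨_, rfl, (hAgrees_asn k σ y f l args).2 h⟩
  | seq A B hA hB =>
    intro σ hσ h
    obtain ⟨y0, hy0⟩ := paths_nonempty B
    obtain ⟨x, hx, hx2⟩ := hA (fun r ts hr => hk r ts (Or.inl hr)) σ
      (fun x hx => prem ⟨y0, by simp⟩ (hσ _ ⟨x, hx, y0, hy0, rfl⟩)) h
    obtain ⟨y, hy, hy2⟩ := hB (fun r ts hr => hk r ts (Or.inr hr)) (σ ++ x)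
      (fun y hy => by simpa using hσ _ ⟨x, hx, y, hy, rfl⟩) hx2
    exact ⟨x ++ y, ⟨x, hx, y, hy, rfl⟩, by simpa using hy2⟩
  | ite p l args A B hA hB =>
    intro σ hσ h
    cases hb : k p (args.map (hexec σ)) with
    | true =>
      obtain ⟨x, hx, hx2⟩ := hA (fun r ts hr => hk r ts (Or.inl hr))
        (σ ++ [Letter.prd p l args true])
        (fun x hx => by simpa using hσ _ (Or.inl ⟨x, hx, rfl⟩)) ((hAgrees_prd ..).2 ⟨h, hb⟩)
      exact ⟨_, Or.inl ⟨x, hx, rfl⟩, by simpa using hx2⟩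
    | false =>
      obtain ⟨x, hx, hx2⟩ := hB (fun r ts hr => hk r ts (Or.inr hr))
        (σ ++ [Letter.prd p l args false])
        (fun x hx => by simpa using hσ _ (Or.inr ⟨x, hx, rfl⟩)) ((hAgrees_prd ..).2 ⟨h, hb⟩)
      exact ⟨_, Or.inr ⟨x, hx, rfl⟩, by simpa using hx2⟩
  | whil p l args B hB =>
    intro σ hσ h
    -- each further iteration uses up one element of `F`
    induction hn : (F \ Visited σ).ncard using Nat.strong_induction_on generalizing σ with
    | _ n ih =>
      subst hn
      cases hb : k p (args.map (hexec σ)) with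
      | false => exact ⟨_, whil_false_mem p l args B, (hAgrees_prd ..).2 ⟨h, hb⟩⟩
      | true =>
        obtain ⟨x0, hx0⟩ := paths_nonempty B
        have hmem : (p, args.map (hexec σ)) ∈ F := by
          by_contra hc
          rw [hk _ _ (Or.inl rfl) hc] at hb
          cases hb
        have hnew : (p, args.map (hexec σ)) ∉ Visited σ := by
          refine not_visited hF (l := l) fun b => ?_
          cases b with
          | false => exact hσ _ (whil_false_mem p l args B)
          | true =>
            exact prem ⟨x0 ++ [Letter.prd p l args false], by simp⟩
              (hσ _ (whil_true_mem hx0 (whil_false_mem p l args B)))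
        obtain ⟨x, hx, hx2⟩ := hB (fun r ts hr => hk r ts (Or.inr hr))
          (σ ++ [Letter.prd p l args true])
          (fun x hx => prem ⟨[Letter.prd p l args false], by simp⟩
            (hσ _ (whil_true_mem hx (whil_false_mem p l args B))))
          ((hAgrees_prd ..).2 ⟨h, hb⟩)
        have hlt : (F \ Visited (σ ++ [Letter.prd p l args true] ++ x)).ncard
            < (F \ Visited σ).ncard := by
          refine Set.ncard_lt_ncard ?_ (hFin.subset Set.sdiff_subset)
          refine ⟨?_, fun hsub => ?_⟩
          · rintro z ⟨hz, hz2⟩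
            refine ⟨hz, fun hv => hz2 ?_⟩
            obtain ⟨τ, l', a', b', h1, h2⟩ := hv
            exact ⟨τ, l', a', b', h1.trans ⟨[Letter.prd p l args true] ++ x, by simp⟩, h2⟩
          · exact (hsub ⟨hmem, hnew⟩).2 ⟨σ, l, args, true, ⟨x, by simp⟩, rfl⟩
        obtain ⟨y, hy, hy2⟩ := ih _ hlt (σ ++ [Letter.prd p l args true] ++ x)
          (fun y hy => by simpa using hσ _ (whil_true_mem hx hy)) hx2 rfl
        exact ⟨_, whil_true_mem hx hy, by simpa using hy2⟩

lemma exists_run {S : Schema} (hF : Free S) {k : HInterp} {F : Set (ℕ × List Trm)}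
    (hFin : F.Finite) (hk : ∀ r ts, HasWhile S r → (r, ts) ∉ F → k r ts = false) :
    ∃ σ, TermRun S (herb k) eSt σ := by
  obtain ⟨x, hx, h⟩ := exists_run_aux hF hFin S hk []
    (fun x hx => ⟨x, by simp, hx⟩) (hAgrees_nil k)
  exact ⟨x, hx, h⟩

/-! ### Control in predicate-linear schemas -/

lemma predCount_pos_of_lsym {T : Schema} {q m : ℕ} (h : LSym.pr q m ∈ lsymSet T) :
    0 < predCount T q := by
  induction T with
  | skip => simp [lsymSet] at h
  | assign y f l args => simp [lsymSet] at h
  | seq A B hA hB =>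
    rcases h with h | h
    · have := hA h; simp only [predCount]; omega
    · have := hB h; simp only [predCount]; omega
  | ite p l args A B hA hB =>
    rcases h with h | h | h
    · cases h; simp only [predCount, if_true]; omega
    · have := hA h; simp only [predCount]; omega
    · have := hB h; simp only [predCount]; omega
  | whil p l args B hB =>
    rcases h with h | h
    · cases h; simp only [predCount, if_true]; omega
    · have := hB h; simp only [predCount]; omega

/-- Some letter of the path is a letter of the predicate symbol `q`. -/
def HasPred (q : ℕ) (σ : List Letter) : Prop := ∃ l args b, Letter.prd q l args b ∈ σ

lemma hasPred_append {q : ℕ} {x y : List Letter} :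
    HasPred q (x ++ y) ↔ HasPred q x ∨ HasPred q y := by
  simp only [HasPred, List.mem_append, ← exists_or]

lemma hasPred_cons {q p l : ℕ} {args : List ℕ} {b : Bool} {x : List Letter} :
    HasPred q (Letter.prd p l args b :: x) ↔ p = q ∨ HasPred q x := by
  constructor
  · rintro ⟨l', a', b', h⟩
    rcases List.mem_cons.1 h with h | h
    · cases h; exact Or.inl rfl
    · exact Or.inr ⟨l', a', b', h⟩
  · rintro (rfl | ⟨l', a', b', h⟩)
    · exact ⟨l, args, b, by simp⟩
    · exact ⟨l', a', b', List.mem_cons_of_mem _ h⟩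

lemma predCount_pos_of_hasPred {T : Schema} {q : ℕ} {σ : List Letter} (hσ : σ ∈ Paths T)
    (h : HasPred q σ) : 0 < predCount T q := by
  induction T generalizing σ with
  | skip => obtain rfl : σ = _ := hσ; simp [HasPred] at h
  | assign y f l args => obtain rfl : σ = _ := hσ; simp [HasPred] at h
  | seq A B hA hB =>
    obtain ⟨x, hx, y, hy, rfl⟩ := hσ
    simp only [predCount]
    rcases hasPred_append.1 h with h | h
    · have := hA hx h; omega
    · have := hB hy h; omega
  | ite p l args A B hA hB =>
    simp only [predCount]
    rcases hσ with ⟨x, hx, rfl⟩ | ⟨x, hx, rfl⟩ <;> rcases hasPred_cons.1 h with h | h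
    · rw [if_pos h]; omega
    · have := hA hx h; omega
    · rw [if_pos h]; omega
    · have := hB hx h; omega
  | whil p l args B hB =>
    obtain ⟨n, hn⟩ := hσ
    simp only [predCount]
    induction n generalizing σ with
    | zero =>
      obtain rfl : σ = _ := hn
      rcases hasPred_cons.1 h with h | h
      · rw [if_pos h]; omega
      · simp [HasPred] at h
    | succ n ih =>
      obtain ⟨x, hx, y, hy, rfl⟩ := hn
      rcases hasPred_cons.1 h with h | h
      · rw [if_pos h]; omega
      · rcases hasPred_append.1 h with h | h
        · have := hB hx h; omega
        · exact ih h hy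

lemma Occurs.predCount_le {X S : Schema} (h : Occurs X S) (r : ℕ) :
    predCount X r ≤ predCount S r := by
  induction h with
  | refl => exact le_rfl
  | _ => simp only [predCount]; omega

lemma HasWhile.predCount_pos {T : Schema} {r : ℕ} (h : HasWhile T r) : 0 < predCount T r := by
  induction T with
  | skip => exact h.elim
  | assign y f l args => exact h.elim
  | seq A B hA hB =>
    simp only [predCount]
    rcases h with h | h
    · have := hA h; omega
    · have := hB h; omega
  | ite p l args A B hA hB =>
    simp only [predCount]
    rcases h with h | h
    · have := hA h; omega
    · have := hB h; omega
  | whil p l args B hB =>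
    simp only [predCount]
    rcases h with h | h
    · rw [if_pos h]; omega
    · have := hB h; omega

lemma not_hasWhile_of_occurs {X S : Schema} {r : ℕ} (h : Occurs X S) (hS : predCount S r ≤ 1)
    (hX : 0 < predCount X r) (hn : ¬ HasWhile X r) : ¬ HasWhile S r := by
  induction h with
  | refl => exact hn
  | @seqL T U ho ih =>
    have h1 := ho.predCount_le r
    simp only [predCount] at hS
    rintro (h | h)
    · exact ih (by omega) h
    · have := h.predCount_pos; omega
  | @seqR T U ho ih =>
    have h1 := ho.predCount_le r
    simp only [predCount] at hS
    rintro (h | h)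
    · have := h.predCount_pos; omega
    · exact ih (by omega) h
  | @iteT t e p l args ho ih =>
    have h1 := ho.predCount_le r
    simp only [predCount] at hS
    rintro (h | h)
    · exact ih (by omega) h
    · have := h.predCount_pos; omega
  | @iteF t e p l args ho ih =>
    have h1 := ho.predCount_le r
    simp only [predCount] at hS
    rintro (h | h)
    · have := h.predCount_pos; omega
    · exact ih (by omega) h
  | @whilB B p l args ho ih =>
    have h1 := ho.predCount_le r
    simp only [predCount] at hS
    rintro (h | h)
    · rw [if_pos h] at hS; omega
    · exact ih (by omega) h

/-- Every complete path of `T` that meets `q` contains a letter `⟨p, b⟩`. -/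
def Dominates (p : ℕ) (b : Bool) (q : ℕ) (T : Schema) : Prop :=
  ∀ σ ∈ Paths T, HasPred q σ → ∃ l args, Letter.prd p l args b ∈ σ

/-- If the only occurrence of `q` in `S` lies in the statement `X`, then domination of `q` in `X`
carries over to `S`. -/
lemma dominates_of_occurs {X S : Schema} {p q : ℕ} {b : Bool} (h : Occurs X S)
    (hS : predCount S q ≤ 1) (hX : 0 < predCount X q) (hd : Dominates p b q X) :
    Dominates p b q S := by
  induction h with
  | refl => exact hd
  | @seqL T U ho ih =>
    have h1 := ho.predCount_le q
    simp only [predCount] at hS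
    rintro _ ⟨x, hx, y, hy, rfl⟩ hq
    rcases hasPred_append.1 hq with hq | hq
    · obtain ⟨l, a, hm⟩ := ih (by omega) x hx hq
      exact ⟨l, a, by simp [hm]⟩
    · have := predCount_pos_of_hasPred hy hq; omega
  | @seqR T U ho ih =>
    have h1 := ho.predCount_le q
    simp only [predCount] at hS
    rintro _ ⟨x, hx, y, hy, rfl⟩ hq
    rcases hasPred_append.1 hq with hq | hq
    · have := predCount_pos_of_hasPred hx hq; omega
    · obtain ⟨l, a, hm⟩ := ih (by omega) y hy hq
      exact ⟨l, a, by simp [hm]⟩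
  | @iteT t e r m args ho ih =>
    have h1 := ho.predCount_le q
    simp only [predCount] at hS
    rintro _ (⟨x, hx, rfl⟩ | ⟨x, hx, rfl⟩) hq <;> rcases hasPred_cons.1 hq with hq | hq
    · rw [if_pos hq] at hS; omega
    · obtain ⟨l, a, hm⟩ := ih (by omega) x hx hq
      exact ⟨l, a, by simp [hm]⟩
    · rw [if_pos hq] at hS; omega
    · have := predCount_pos_of_hasPred hx hq; omega
  | @iteF t e r m args ho ih =>
    have h1 := ho.predCount_le q
    simp only [predCount] at hS
    rintro _ (⟨x, hx, rfl⟩ | ⟨x, hx, rfl⟩) hq <;> rcases hasPred_cons.1 hq with hq | hq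
    · rw [if_pos hq] at hS; omega
    · have := predCount_pos_of_hasPred hx hq; omega
    · rw [if_pos hq] at hS; omega
    · obtain ⟨l, a, hm⟩ := ih (by omega) x hx hq
      exact ⟨l, a, by simp [hm]⟩
  | @whilB B r m args ho ih =>
    have h1 := ho.predCount_le q
    simp only [predCount] at hS
    rintro σ ⟨n, hn⟩ hq
    induction n generalizing σ with
    | zero =>
      obtain rfl : σ = _ := hn
      rcases hasPred_cons.1 hq with hq | hq
      · rw [if_pos hq] at hS; omega
      · simp [HasPred] at hq
    | succ n ihn =>
      obtain ⟨x, hx, y, hy, rfl⟩ := hn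
      rcases hasPred_cons.1 hq with hq | hq
      · rw [if_pos hq] at hS; omega
      · rcases hasPred_append.1 hq with hq | hq
        · obtain ⟨l, a, hm⟩ := ih (by omega) x hx hq
          exact ⟨l, a, by simp [hm]⟩
        · obtain ⟨l, a, hm⟩ := ihn y hy hq
          exact ⟨l, a, by simp [hm]⟩

/-- If `p` controls `q`, then `q` is reached only through one fixed branch `b` of `p`, and `b` is
true whenever `p` is a while predicate. -/
lemma exists_branch {S : Schema} (hPL : PredLinear S) {p q l m : ℕ}
    (hc : ControlsL S p l (LSym.pr q m)) :
    ∃ b, Dominates p b q S ∧ (b = false → ¬ HasWhile S p) := by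
  rcases hc with ⟨args, t, e, ho, hq | hq⟩ | ⟨args, B, ho, hq⟩
  · have hpos := predCount_pos_of_lsym hq
    have hle := (ho.predCount_le q).trans (hPL q)
    simp only [predCount] at hle
    refine ⟨true, dominates_of_occurs ho (hPL q) (by simp only [predCount]; omega) ?_, by simp⟩
    rintro _ (⟨x, hx, rfl⟩ | ⟨x, hx, rfl⟩) hσ
    · exact ⟨l, args, by simp⟩
    · rcases hasPred_cons.1 hσ with h | h
      · rw [if_pos h] at hle; omega
      · have := predCount_pos_of_hasPred hx h; omega
  · have hpos := predCount_pos_of_lsym hq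
    have hle := (ho.predCount_le q).trans (hPL q)
    have hlep := (ho.predCount_le p).trans (hPL p)
    simp only [predCount, if_true] at hle hlep
    refine ⟨false, dominates_of_occurs ho (hPL q) (by simp only [predCount]; omega) ?_,
      fun _ => not_hasWhile_of_occurs ho (hPL p) (by simp only [predCount, if_true]; omega) ?_⟩
    · rintro _ (⟨x, hx, rfl⟩ | ⟨x, hx, rfl⟩) hσ
      · rcases hasPred_cons.1 hσ with h | h
        · rw [if_pos h] at hle; omega
        · have := predCount_pos_of_hasPred hx h; omega
      · exact ⟨l, args, by simp⟩
    · rintro (h | h) <;> have := h.predCount_pos <;> omega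
  · have hpos := predCount_pos_of_lsym hq
    have hle := (ho.predCount_le q).trans (hPL q)
    simp only [predCount] at hle
    refine ⟨true, dominates_of_occurs ho (hPL q) (by simp only [predCount]; omega) ?_, by simp⟩
    rintro σ ⟨n, hn⟩ hσ
    cases n with
    | zero =>
      obtain rfl : σ = _ := hn
      rcases hasPred_cons.1 hσ with h | h
      · rw [if_pos h] at hle; omega
      · simp [HasPred] at h
    | succ n =>
      obtain ⟨x, hx, y, hy, rfl⟩ := hn
      exact ⟨l, args, by simp⟩

/-! ### Changing finitely many values of `p` -/

open Classical in
/-- `k` with the value of `p` at the argument vectors in `A` replaced by `c`. -/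
noncomputable def setOn (p : ℕ) (c : Bool) (A : Finset (List Trm)) (k : HInterp) : HInterp :=
  fun r ts => if r = p ∧ ts ∈ A then c else k r ts

/-- Without `pu`-couples, overwriting finitely many values of `p` in an almost everywhere default
interpretation preserves the final value of `u`. -/
lemma flip_finset {S : Schema} (hF : Free S) {p u : ℕ} {c : Bool}
    (hc : HasWhile S p → c = false)
    (hno : ¬ ∃ i j : HInterp, PUCouple S p u i j) {k : HInterp} {F : Set (ℕ × List Trm)}
    (hFin : F.Finite) (hk : ∀ r ts, HasWhile S r → (r, ts) ∉ F → k r ts = false)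
    {σ : List Letter} (hσ : TermRun S (herb k) eSt σ) (A : Finset (List Trm)) :
    ∃ τ, TermRun S (herb (setOn p c A k)) eSt τ ∧ hexec σ u = hexec τ u := by
  classical
  induction A using Finset.induction_on with
  | empty =>
    have : setOn p c ∅ k = k := by funext r ts; simp [setOn]
    exact ⟨σ, by rw [this]; exact hσ, rfl⟩
  | insert a A ha ih =>
    obtain ⟨τ, hτ, hu⟩ := ih
    by_cases he : setOn p c A k p a = c
    · refine ⟨τ, ?_, hu⟩
      have : setOn p c (insert a A) k = setOn p c A k := by
        funext r ts
        by_cases h : r = p ∧ ts = a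
        · obtain ⟨rfl, rfl⟩ := h
          rw [he]; simp [setOn]
        · have : (r = p ∧ ts ∈ insert a A) ↔ (r = p ∧ ts ∈ A) := by
            rw [Finset.mem_insert]; tauto
          simp only [setOn, this]
      rw [this]; exact hτ
    · have hk2 : ∀ r ts, HasWhile S r → (r, ts) ∉ F → setOn p c (insert a A) k r ts = false := by
        intro r ts hr hts
        unfold setOn
        split_ifs with h
        · exact hc (h.1 ▸ hr)
        · exact hk r ts hr hts
      obtain ⟨τ2, hτ2⟩ := exists_run hF hFin hk2
      refine ⟨τ2, hτ2, hu.trans ?_⟩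
      by_contra hne
      refine hno ⟨_, _, a, ⟨?_, ?_⟩, τ, τ2, hτ, hτ2, hne⟩
      · simpa [setOn] using he
      · intro r ts hr
        have : (r = p ∧ ts ∈ insert a A) ↔ (r = p ∧ ts ∈ A) := by
          rw [Finset.mem_insert]
          simp only [ne_eq, Prod.mk.injEq] at hr
          tauto
        simp only [setOn, this]

/-- Lemma 21 / pred.abuv.pred.lem: in a free, predicate-linear
schema, if p controls q and there is a qu-couple, then there is a pu-couple. -/
theorem couple_propagates_up_control (S : Schema) (hW : WellLabelled S)
    (hF : Free S) (hPL : PredLinear S) (p q u : ℕ)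
    (hc : ∃ l m, ControlsL S p l (LSym.pr q m))
    (h : ∃ i j : HInterp, PUCouple S q u i j) :
    ∃ i j : HInterp, PUCouple S p u i j := by
  classical
  by_contra hno
  obtain ⟨l, m, hc⟩ := hc
  obtain ⟨i, j, t, ⟨-, hij⟩, σ, τ, hσ, hτ, hne⟩ := h
  obtain ⟨b, hdom, hb⟩ := exists_branch hPL hc
  obtain ⟨F1, hF1, hs1⟩ := exists_finite_support σ
  obtain ⟨F2, hF2, hs2⟩ := exists_finite_support τ
  have hFin := hF1.union hF2
  set F := F1 ∪ F2 with hFdef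
  -- the restriction of `k` to `F`, extended by the default value
  let r0 : HInterp → HInterp := fun k r ts =>
    if (r, ts) ∈ F then k r ts else if r = p then !b else false
  have hcw : HasWhile S p → (!b) = false := by
    intro hw
    cases b with
    | true => rfl
    | false => exact absurd hw (hb rfl)
  have hdef : ∀ k r ts, HasWhile S r → (r, ts) ∉ F → r0 k r ts = false := by
    intro k r ts hr hts
    simp only [r0, if_neg hts]
    split_ifs with hrp
    · exact hcw (hrp ▸ hr)
    · rfl
  have hσ0 : TermRun S (herb (r0 i)) eSt σ :=
    ⟨hσ.1, hs1 i _ hσ.2 fun r ts hr => if_pos (Or.inl hr)⟩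
  have hτ0 : TermRun S (herb (r0 j)) eSt τ :=
    ⟨hτ.1, hs2 j _ hτ.2 fun r ts hr => if_pos (Or.inr hr)⟩
  let A : Finset (List Trm) := (hFin.image Prod.snd).toFinset
  have hA : ∀ k ts, setOn p (!b) A (r0 k) p ts = !b := by
    intro k ts
    unfold setOn
    split_ifs with h1
    · rfl
    · have : (p, ts) ∉ F := fun hm =>
        h1 ⟨rfl, (Set.Finite.mem_toFinset _).2 ⟨_, hm, rfl⟩⟩
      simp [r0, this]
  obtain ⟨σ1, hσ1, hu1⟩ := flip_finset hF hcw hno hFin (hdef i) hσ0 A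
  obtain ⟨τ1, hτ1, hu2⟩ := flip_finset hF hcw hno hFin (hdef j) hτ0 A
  -- once `p` is constantly `!b`, the predicate `q` is not reached
  have hnq : ∀ l' args b', Letter.prd q l' args b' ∉ σ1 := by
    intro l' args b' hm
    obtain ⟨l2, a2, hm2⟩ := hdom σ1 hσ1.1 ⟨l', args, b', hm⟩
    obtain ⟨x, y, rfl⟩ := List.append_of_mem hm2
    have := (hAgrees_iff _ _).1 hσ1.2 x p l2 a2 b ⟨y, by simp⟩
    rw [hA] at this
    simp at this
  have hrun : TermRun S (herb (setOn p (!b) A (r0 j))) eSt σ1 := by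
    refine ⟨hσ1.1, agrees_of_no_pred hσ1.2 hnq fun r ts hr => ?_⟩
    have : i r ts = j r ts := hij r ts (by simp [hr])
    simp only [setOn, r0, this]
  rw [run_unique hrun hτ1] at hu1
  exact hne (hu1.trans hu2.symm)

end SchemaSlicing
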